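/- Let a ≥ 0, b > 0 and c ∈ ℝ. Then the Abel equation (E) has at most two limit cycles that are nowhere zero: there do not exist three pairwise distinct 2π-periodic solutions y₁, y₂, y₃ of (E), each satisfying yᵢ(x) ≠ 0 for all x, such that each yᵢ is isolated among 2π-periodic solutions. (Via the transformation y ↦ 1/y, this says the Josephson system x′ = y, y′ = −(sin x − a) − (b + c·cos x)·y has at most two limit cycles of the second kind.) -/

import Mathlib

open Real

/-- `y` is a 2π-periodic solution of the Abel equation
`y′ = (b + c·cos x)·y² + (sin x − a)·y³`. -/
def IsAbelPeriodicSolution (a b c : ℝ) (y : ℝ → ℝ) : Prop :=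
  (∀ x : ℝ, HasDerivAt y
    ((b + c * Real.cos x) * (y x) ^ 2 + (Real.sin x - a) * (y x) ^ 3) x) ∧
  (∀ x : ℝ, y (x + 2 * Real.pi) = y x)

/-- `y` is isolated among 2π-periodic solutions of the Abel equation
(i.e. it is a limit cycle). -/
def IsAbelLimitCycle (a b c : ℝ) (y : ℝ → ℝ) : Prop :=
  IsAbelPeriodicSolution a b c y ∧
  ∃ ε > 0, ∀ z : ℝ → ℝ, IsAbelPeriodicSolution a b c z → |z 0 - y 0| < ε → z = y

/-!
The inverse `z = 1 / y` of a nowhere zero solution satisfies `z' = -B - A / z`, where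
`A x = sin x - a` and `B x = b + c * cos x`. The symmetries `z ↦ -z` and `z x ↦ -z (-x)` reduce to
`0 ≤ a` and `0 < b`, and distinct solutions never meet, so that three of them are ordered.

If `c ≤ 0`, the square of `z + c * A` shows that there is at most one periodic solution of each
sign. If `0 < c`, every periodic solution is positive. Dulac functions `1 / (α + l * z)` exclude two
ordered ones unless `b ^ 2 < c ^ 2 * (1 - a ^ 2)`, in which case `B / A` is strictly decreasing
between consecutive zeros of `A`.

In the remaining case the ratio of the two gaps between three ordered solutions decreases while
`0 < A` and increases while `A < 0`. Parametrised by this ratio, the two pieces of one period are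
triples of functions which agree at both ends and satisfy the same differential equations, except
that their slopes `B / A` vary in opposite directions and cross once. A quantity attached to the
triples, chosen by the sign of the common slope at the crossing, is larger there for one triple when
it is followed from the left end, and larger for the other when it is followed from the right end.
-/

section

open Set Filter Topology

section Calculus

theorem continuousOn_invFunOn_of_isCompact {X Y : Type*} [TopologicalSpace X] [TopologicalSpace Y]
    [T2Space Y] [Nonempty X] {f : X → Y} {K : Set X} (hK : IsCompact K) (hf : ContinuousOn f K)
    (hinj : InjOn f K) : ContinuousOn (Function.invFunOn f K) (f '' K) := by
  refine continuousOn_iff_isClosed.2 fun C hC => ⟨f '' (K ∩ C), ?_, ?_⟩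
  · exact ((hK.inter_right hC).image_of_continuousOn (hf.mono inter_subset_left)).isClosed
  · ext y
    constructor
    · rintro ⟨hyC, x, hx, rfl⟩
      rw [mem_preimage, hinj.leftInvOn_invFunOn hx] at hyC
      exact ⟨⟨x, ⟨hx, hyC⟩, rfl⟩, x, hx, rfl⟩
    · rintro ⟨⟨x, ⟨hx, hxC⟩, rfl⟩, hy⟩
      exact ⟨by rwa [mem_preimage, hinj.leftInvOn_invFunOn hx], hy⟩

theorem hasDerivAt_invFunOn_of_isCompact {𝕜 : Type*} [NontriviallyNormedField 𝕜] {f : 𝕜 → 𝕜}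
    {K : Set 𝕜} {x f' : 𝕜} (hK : IsCompact K) (hf : ContinuousOn f K) (hinj : InjOn f K)
    (hx : x ∈ K) (hfx : HasDerivAt f f' x) (hf' : f' ≠ 0) (hmem : f '' K ∈ 𝓝 (f x)) :
    HasDerivAt (Function.invFunOn f K) f'⁻¹ (f x) := by
  have hgx : Function.invFunOn f K (f x) = x := hinj.leftInvOn_invFunOn hx
  refine HasDerivAt.of_local_left_inverse
    ((continuousOn_invFunOn_of_isCompact hK hf hinj).continuousAt hmem) (hgx.symm ▸ hfx) hf' ?_
  filter_upwards [hmem] with y hy using (surjOn_image f K).rightInvOn_invFunOn hy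

theorem mapsTo_invFunOn_of_surjOn {X Y : Type*} [Nonempty X] {f : X → Y} {K U : Set X} {V : Set Y}
    (hinj : InjOn f K) (hUK : U ⊆ K) (hUV : SurjOn f U V) :
    MapsTo (Function.invFunOn f K) V U := fun y hy => by
  obtain ⟨x, hx, rfl⟩ := hUV hy
  rwa [hinj.leftInvOn_invFunOn (hUK hx)]

theorem tendsto_invFunOn_nhdsWithin_of_isCompact {X Y : Type*} [TopologicalSpace X]
    [TopologicalSpace Y] [T2Space Y] [Nonempty X] {f : X → Y} {K U : Set X} {V : Set Y} {x : X}
    (hK : IsCompact K) (hf : ContinuousOn f K) (hinj : InjOn f K) (hx : x ∈ K) (hUK : U ⊆ K)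
    (hUV : SurjOn f U V) : Tendsto (Function.invFunOn f K) (𝓝[V] (f x)) (𝓝[U] x) := by
  have hcont := continuousOn_invFunOn_of_isCompact hK hf hinj (f x) (mem_image_of_mem f hx)
  rw [ContinuousWithinAt, hinj.leftInvOn_invFunOn hx] at hcont
  exact tendsto_nhdsWithin_iff.2
    ⟨hcont.mono_left (nhdsWithin_mono _ (hUV.trans (image_mono hUK))),
      eventually_nhdsWithin_of_forall (mapsTo_invFunOn_of_surjOn hinj hUK hUV)⟩

theorem strictMonoOn_invFunOn {X Y : Type*} [LinearOrder X] [Nonempty X] [Preorder Y] {f : X → Y}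
    {K : Set X} {V : Set Y} (hf : StrictMonoOn f K) (hKV : SurjOn f K V) :
    StrictMonoOn (Function.invFunOn f K) V := fun s hs t ht hst => by
  rwa [← hf.lt_iff_lt (hKV.mapsTo_invFunOn hs) (hKV.mapsTo_invFunOn ht),
    hKV.rightInvOn_invFunOn hs, hKV.rightInvOn_invFunOn ht]

theorem strictAntiOn_invFunOn {X Y : Type*} [LinearOrder X] [Nonempty X] [Preorder Y] {f : X → Y}
    {K : Set X} {V : Set Y} (hf : StrictAntiOn f K) (hKV : SurjOn f K V) :
    StrictAntiOn (Function.invFunOn f K) V := fun s hs t ht hst => by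
  rwa [← hf.lt_iff_gt (hKV.mapsTo_invFunOn hs) (hKV.mapsTo_invFunOn ht),
    hKV.rightInvOn_invFunOn hs, hKV.rightInvOn_invFunOn ht]

theorem exists_hasDerivAt_of_continuousOn_Ioi {f : ℝ → ℝ} {a : ℝ} (hf : ContinuousOn f (Ioi a)) :
    ∃ F : ℝ → ℝ, ∀ u ∈ Ioi a, HasDerivAt F (f u) u := by
  refine ⟨fun u => ∫ s in (a + 1)..u, f s, fun u hu => ?_⟩
  have hsub : uIcc (a + 1) u ⊆ Ioi a :=
    ordConnected_Ioi.uIcc_subset (by simp) hu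
  exact intervalIntegral.integral_hasDerivAt_right (hf.mono hsub).intervalIntegrable
    (hf.stronglyMeasurableAtFilter isOpen_Ioi u hu) (hf.continuousAt (Ioi_mem_nhds hu))

theorem eq_zero_of_hasDerivAt_mul_self {k d : ℝ → ℝ} (hk : Continuous k)
    (hd : ∀ x, HasDerivAt d (k x * d x) x) {x₀ : ℝ} (h₀ : d x₀ = 0) (x : ℝ) : d x = 0 := by
  have hE : ∀ x, HasDerivAt (fun u => d u * Real.exp (-∫ t in x₀..u, k t)) 0 x := fun x =>
    ((hd x).mul (hk.integral_hasStrictDerivAt x₀ x).hasDerivAt.fun_neg.exp).congr_deriv (by ring)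
  have h := is_const_of_deriv_eq_zero (fun x => (hE x).differentiableAt)
    (fun x => (hE x).deriv) x x₀
  simpa [h₀, (Real.exp_pos _).ne'] using h

theorem not_periodic_of_hasDerivAt_nonpos {f f' : ℝ → ℝ} {T x₀ : ℝ} (hT : 0 < T)
    (hf : ∀ x, HasDerivAt f (f' x) x) (hle : ∀ x, f' x ≤ 0) (hx₀ : f' x₀ < 0) :
    ¬ Function.Periodic f T := fun hper => by
  have hanti : Antitone f := antitone_of_hasDerivAt_nonpos hf hle
  have hconst : f =ᶠ[𝓝 x₀] fun _ => f (x₀ - T / 2) := by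
    filter_upwards [Ioo_mem_nhds (show x₀ - T / 2 < x₀ by linarith)
      (show x₀ < x₀ - T / 2 + T by linarith)] with s hs
    exact le_antisymm (hanti hs.1.le) (hper (x₀ - T / 2) ▸ hanti hs.2.le)
  exact hx₀.ne ((hf x₀).unique ((hasDerivAt_const x₀ _).congr_of_eventuallyEq hconst))

end Calculus

section Shooting

theorem eventually_pos_of_deriv_pos {G G' : ℝ → ℝ} {r : ℝ}
    (hG : ContinuousWithinAt G (Ici r) r) (h₀ : G r = 0)
    (hG' : ∀ᶠ t in 𝓝[>] r, HasDerivAt G (G' t) t ∧ 0 < G' t) : ∀ᶠ t in 𝓝[>] r, 0 < G t := by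
  obtain ⟨q, hq, hsub⟩ := mem_nhdsGT_iff_exists_Ioo_subset.1 hG'
  have hcont : ContinuousOn G (Ico r q) := fun t ht => by
    rcases ht.1.eq_or_lt with rfl | hrt
    · exact hG.mono Ico_subset_Ici_self
    · exact (hsub ⟨hrt, ht.2⟩).1.continuousAt.continuousWithinAt
  have hmono : StrictMonoOn G (Ico r q) := by
    refine strictMonoOn_of_deriv_pos (convex_Ico r q) hcont fun t ht => ?_
    rw [interior_Ico] at ht
    exact (hsub ht).1.deriv ▸ (hsub ht).2
  filter_upwards [Ioo_mem_nhdsGT hq] with t ht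
  exact h₀ ▸ hmono (left_mem_Ico.2 hq) ⟨ht.1.le, ht.2⟩ ht.1

theorem exists_first_zero {G : ℝ → ℝ} {r v : ℝ} (hG : ContinuousOn G (Icc r v)) (hrv : r < v)
    (hpos : ∀ᶠ t in 𝓝[>] r, 0 < G t) (hv : G v ≤ 0) :
    ∃ t ∈ Ioc r v, G t = 0 ∧ ∀ u ∈ Ioo r t, 0 < G u := by
  obtain ⟨p, hrp, hp⟩ := mem_nhdsGT_iff_exists_Ioc_subset.1 hpos
  rw [mem_Ioi] at hrp
  have hpv : p < v := lt_of_not_ge fun h => hv.not_gt (hp ⟨hrv, h⟩)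
  have hGp : 0 < G p := hp ⟨hrp, le_rfl⟩
  have hG' : ContinuousOn G (Icc p v) := hG.mono (Icc_subset_Icc_left hrp.le)
  have hcompact : IsCompact (Icc p v ∩ G ⁻¹' Iic 0) :=
    isCompact_Icc.of_isClosed_subset (hG'.preimage_isClosed_of_isClosed isClosed_Icc isClosed_Iic)
      inter_subset_left
  obtain ⟨t, ⟨htI, htG⟩, hmin⟩ := hcompact.exists_isLeast ⟨v, right_mem_Icc.2 hpv.le, hv⟩
  refine ⟨t, ⟨hrp.trans_le htI.1, htI.2⟩, ?_, fun u hu => ?_⟩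
  · obtain ⟨w, hw, hGw⟩ := intermediate_value_Icc' htI.1
      (hG'.mono (Icc_subset_Icc_right htI.2)) ⟨htG, hGp.le⟩
    have htw : t ≤ w := hmin ⟨⟨hw.1, hw.2.trans htI.2⟩, hGw.le⟩
    rwa [← htw.antisymm hw.2] at hGw
  · rcases le_or_gt u p with hup | hpu
    · exact hp ⟨hu.1, hup⟩
    · exact lt_of_not_ge fun h => hu.2.not_ge (hmin ⟨⟨hpu.le, hu.2.le.trans htI.2⟩, h⟩)

theorem deriv_nonpos_of_eventually_pos_left {G : ℝ → ℝ} {t G' : ℝ} (hG : HasDerivAt G G' t)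
    (h₀ : G t = 0) (hpos : ∀ᶠ u in 𝓝[<] t, 0 < G u) : G' ≤ 0 := by
  refine le_of_tendsto (hasDerivAt_iff_tendsto_slope_left_right.1 hG).1 ?_
  filter_upwards [hpos, self_mem_nhdsWithin] with u hu hut
  rw [slope_def_field, h₀, sub_zero]
  exact (div_neg_of_pos_of_neg hu (sub_neg.2 hut)).le

/-- `D` increases as long as `G > 0`, and `G` cannot return to zero while `D > 0`. -/
theorem pos_of_shooting {D G D' G' : ℝ → ℝ} {r s : ℝ} (hrs : r < s)
    (hDc : ContinuousOn D (Icc r s)) (hGc : ContinuousOn G (Icc r s)) (hD₀ : D r = 0)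
    (hG₀ : G r = 0) (hD : ∀ t ∈ Ioo r s, HasDerivAt D (D' t) t)
    (hG : ∀ t ∈ Ioo r s, HasDerivAt G (G' t) t) (hD' : ∀ t ∈ Ioo r s, 0 < G t → 0 < D' t)
    (hinit : ∀ᶠ t in 𝓝[>] r, 0 < G' t) (hG' : ∀ t ∈ Ioo r s, G t = 0 → 0 < D t → 0 < G' t) :
    0 < D s := by
  have hDpos : ∀ t ∈ Ioc r s, (∀ u ∈ Ioo r t, 0 < G u) → 0 < D t := fun t ht hGt => by
    have hmono : StrictMonoOn D (Icc r t) := by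
      refine strictMonoOn_of_deriv_pos (convex_Icc r t)
        (hDc.mono (Icc_subset_Icc_right ht.2)) fun u hu => ?_
      rw [interior_Icc] at hu
      have hu' : u ∈ Ioo r s := Ioo_subset_Ioo_right ht.2 hu
      exact (hD u hu').deriv ▸ hD' u hu' (hGt u hu)
    exact hD₀ ▸ hmono (left_mem_Icc.2 ht.1.le) (right_mem_Icc.2 ht.1.le) ht.1
  have hGnear : ∀ᶠ t in 𝓝[>] r, 0 < G t := by
    refine eventually_pos_of_deriv_pos (G' := G') ?_ hG₀ ?_
    · exact (hGc r (left_mem_Icc.2 hrs.le)).mono_of_mem_nhdsWithin (Icc_mem_nhdsGE hrs)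
    · filter_upwards [hinit, Ioo_mem_nhdsGT hrs] with t ht htI using ⟨hG t htI, ht⟩
  refine hDpos s (right_mem_Ioc.2 hrs) fun v hv => lt_of_not_ge fun hGv => ?_
  obtain ⟨t, ht, hGt, hpos⟩ :=
    exists_first_zero (hGc.mono (Icc_subset_Icc_right hv.2.le)) hv.1 hGnear hGv
  have hts : t ∈ Ioo r s := ⟨ht.1, ht.2.trans_lt hv.2⟩
  refine (hG' t hts hGt (hDpos t (Ioo_subset_Ioc_self hts) hpos)).not_ge
    (deriv_nonpos_of_eventually_pos_left (hG t hts) hGt ?_)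
  filter_upwards [Ioo_mem_nhdsLT ht.1] with u hu using hpos u hu

/-- Two slope functions on `(r₀, r₁)` in the configuration that forces a crossing: `β` increases
from negative to positive values while `γ` decreases from positive to negative values. -/
structure IsSlopeCrossing (r₀ r₁ : ℝ) (β γ : ℝ → ℝ) : Prop where
  strictMonoOn : StrictMonoOn β (Ioo r₀ r₁)
  strictAntiOn : StrictAntiOn γ (Ioo r₀ r₁)
  left : ∀ᶠ t in 𝓝[>] r₀, β t < 0 ∧ 0 < γ t
  right : ∀ᶠ t in 𝓝[<] r₁, 0 < β t ∧ γ t < 0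

namespace IsSlopeCrossing

variable {r₀ r₁ s : ℝ} {β γ : ℝ → ℝ}

theorem neg_swap (h : IsSlopeCrossing r₀ r₁ β γ) : IsSlopeCrossing r₀ r₁ (-γ) (-β) where
  strictMonoOn := h.strictAntiOn.neg
  strictAntiOn := h.strictMonoOn.neg
  left := h.left.mono fun _ ht => ⟨neg_neg_of_pos ht.2, neg_pos.2 ht.1⟩
  right := h.right.mono fun _ ht => ⟨neg_pos.2 ht.2, neg_neg_of_pos ht.1⟩

theorem comp_neg (h : IsSlopeCrossing r₀ r₁ β γ) :
    IsSlopeCrossing (-r₁) (-r₀) (fun t => γ (-t)) (fun t => β (-t)) where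
  strictMonoOn _ hx _ hy hxy :=
    h.strictAntiOn (neg_mem_Ioo_iff.2 hy) (neg_mem_Ioo_iff.2 hx) (neg_lt_neg hxy)
  strictAntiOn _ hx _ hy hxy :=
    h.strictMonoOn (neg_mem_Ioo_iff.2 hy) (neg_mem_Ioo_iff.2 hx) (neg_lt_neg hxy)
  left := (tendsto_neg_nhdsGT_neg.eventually h.right).mono fun _ => And.symm
  right := (tendsto_neg_nhdsLT_neg.eventually h.left).mono fun _ => And.symm

theorem exists_eq (h : IsSlopeCrossing r₀ r₁ β γ) (hr : r₀ < r₁)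
    (hβ : ContinuousOn β (Ioo r₀ r₁)) (hγ : ContinuousOn γ (Ioo r₀ r₁)) :
    ∃ s ∈ Ioo r₀ r₁, β s = γ s := by
  obtain ⟨u, hu, huI⟩ := (h.left.and (Ioo_mem_nhdsGT hr)).exists
  obtain ⟨v, hv, hvI⟩ := (h.right.and (Ioo_mem_nhdsLT hr)).exists
  obtain ⟨s, hs, hβγ⟩ := isPreconnected_Ioo.intermediate_value₂ huI hvI hβ hγ
    (hu.1.trans hu.2).le (hv.2.trans hv.1).le
  exact ⟨s, hs, hβγ⟩

/-- Before the crossing `γ` exceeds both `β` and `0`, so `D > 0 = G` forces `G' > 0`. -/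
theorem pos_at_crossing (h : IsSlopeCrossing r₀ r₁ β γ) {D G D' P Q : ℝ → ℝ}
    (hs : s ∈ Ioo r₀ r₁) (hβγ : β s = γ s) (hnonneg : 0 ≤ β s)
    (hDc : ContinuousOn D (Icc r₀ r₁)) (hGc : ContinuousOn G (Icc r₀ r₁)) (hD₀ : D r₀ = 0)
    (hG₀ : G r₀ = 0) (hD : ∀ t ∈ Ioo r₀ r₁, HasDerivAt D (D' t) t)
    (hG : ∀ t ∈ Ioo r₀ r₁, HasDerivAt G (γ t * Q t - β t * P t) t)
    (hD' : ∀ t ∈ Ioo r₀ r₁, 0 < G t → 0 < D' t) (hP : ∀ t ∈ Ioo r₀ r₁, 0 < P t)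
    (hQ : ∀ t ∈ Ioo r₀ r₁, 0 < Q t)
    (hPQ : ∀ t ∈ Ioo r₀ r₁, G t = 0 → 0 < D t → P t < Q t) : 0 < D s := by
  have hIcc : Icc r₀ s ⊆ Icc r₀ r₁ := Icc_subset_Icc_right hs.2.le
  have hIoo : Ioo r₀ s ⊆ Ioo r₀ r₁ := Ioo_subset_Ioo_right hs.2.le
  refine pos_of_shooting hs.1 (hDc.mono hIcc) (hGc.mono hIcc) hD₀ hG₀
    (fun t ht => hD t (hIoo ht)) (fun t ht => hG t (hIoo ht)) (fun t ht => hD' t (hIoo ht)) ?_ ?_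
  · filter_upwards [h.left, Ioo_mem_nhdsGT (hs.1.trans hs.2)] with t ht htI
    linarith [mul_pos ht.2 (hQ t htI), mul_neg_of_neg_of_pos ht.1 (hP t htI)]
  · intro t ht hGt hDt
    have hβt : β t < β s := h.strictMonoOn (hIoo ht) hs ht.2
    have hγt : γ s < γ t := h.strictAntiOn (hIoo ht) hs ht.2
    have hβP : β t * P t < γ t * P t :=
      mul_lt_mul_of_pos_right (by linarith) (hP t (hIoo ht))
    have hPQt : γ t * P t < γ t * Q t :=
      mul_lt_mul_of_pos_left (hPQ t (hIoo ht) hGt hDt) (by linarith)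
    linarith

/-- Shooting from both ends gives `D` opposite signs at the crossing. -/
theorem false_of_shooting (h : IsSlopeCrossing r₀ r₁ β γ) {D G D' P Q : ℝ → ℝ}
    (hs : s ∈ Ioo r₀ r₁) (hβγ : β s = γ s) (hnonneg : 0 ≤ β s)
    (hDc : ContinuousOn D (Icc r₀ r₁)) (hGc : ContinuousOn G (Icc r₀ r₁))
    (hD₀ : EqOn D 0 {r₀, r₁}) (hG₀ : EqOn G 0 {r₀, r₁})
    (hD : ∀ t ∈ Ioo r₀ r₁, HasDerivAt D (D' t) t)
    (hG : ∀ t ∈ Ioo r₀ r₁, HasDerivAt G (γ t * Q t - β t * P t) t)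
    (hD' : ∀ t ∈ Ioo r₀ r₁, 0 < G t → 0 < D' t) (hP : ∀ t ∈ Ioo r₀ r₁, 0 < P t)
    (hQ : ∀ t ∈ Ioo r₀ r₁, 0 < Q t)
    (hPQ : ∀ t ∈ Ioo r₀ r₁, G t = 0 → 0 < D t → P t < Q t)
    (hQP : ∀ t ∈ Ioo r₀ r₁, G t = 0 → D t < 0 → Q t < P t) : False := by
  have hpos : 0 < D s := h.pos_at_crossing hs hβγ hnonneg hDc hGc (hD₀ (by simp)) (hG₀ (by simp))
    hD hG hD' hP hQ hPQ
  have hmem : ∀ t ∈ Ioo (-r₁) (-r₀), -t ∈ Ioo r₀ r₁ := fun t => neg_mem_Ioo_iff.2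
  have hmaps : MapsTo (fun t : ℝ => -t) (Icc (-r₁) (-r₀)) (Icc r₀ r₁) :=
    fun t => neg_mem_Icc_iff.2
  have hneg : 0 < -D (- -s) := by
    refine h.comp_neg.pos_at_crossing (D := fun t => -D (-t)) (G := fun t => G (-t))
      (D' := fun t => D' (-t)) (P := fun t => Q (-t)) (Q := fun t => P (-t))
      (neg_mem_Ioo_iff.2 (by simpa using hs)) (by simpa using hβγ.symm)
      (by simpa using hβγ ▸ hnonneg) (hDc.comp continuous_neg.continuousOn hmaps).fun_neg
      (hGc.comp continuous_neg.continuousOn hmaps) ?_ ?_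
      (fun t ht => ((hD _ (hmem t ht)).comp t (hasDerivAt_neg t)).fun_neg.congr_deriv (by simp))
      (fun t ht => ((hG _ (hmem t ht)).comp t (hasDerivAt_neg t)).congr_deriv (by ring))
      (fun t ht => hD' _ (hmem t ht)) (fun t ht => hQ _ (hmem t ht))
      (fun t ht => hP _ (hmem t ht))
      (fun t ht hGt hDt => hQP _ (hmem t ht) hGt (neg_pos.1 hDt))
    · simpa using hD₀ (mem_insert_of_mem r₀ rfl)
    · simpa using hG₀ (mem_insert_of_mem r₀ rfl)
  rw [neg_neg] at hneg
  linarith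

end IsSlopeCrossing

theorem isSlopeCrossing_comp_invFunOn {f φ : ℝ → ℝ} {p q p' : ℝ} (hpq : p < q) (hqp' : q < p')
    (hf : ContinuousOn f (Icc p q)) (hf' : ContinuousOn f (Icc q p'))
    (hanti : StrictAntiOn f (Icc p q)) (hmono : StrictMonoOn f (Icc q p')) (hpp' : f p' = f p)
    (hφ : StrictAntiOn φ (Ioo p q)) (hφ' : StrictAntiOn φ (Ioo q p'))
    (hp : ∀ᶠ x in 𝓝[>] p, 0 < φ x) (hq : ∀ᶠ x in 𝓝[<] q, φ x < 0)
    (hq' : ∀ᶠ x in 𝓝[>] q, 0 < φ x) (hp' : ∀ᶠ x in 𝓝[<] p', φ x < 0) :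
    IsSlopeCrossing (f q) (f p) (fun t => φ (Function.invFunOn f (Icc p q) t))
      (fun t => φ (Function.invFunOn f (Icc q p') t)) := by
  have hr : f q < f p := hanti (left_mem_Icc.2 hpq.le) (right_mem_Icc.2 hpq.le) hpq
  have hsurj : SurjOn f (Ioo p q) (Ioo (f q) (f p)) := intermediate_value_Ioo' hpq.le hf
  have hsurj' : SurjOn f (Ioo q p') (Ioo (f q) (f p)) :=
    hpp' ▸ intermediate_value_Ioo hqp'.le hf'
  have hg := mapsTo_invFunOn_of_surjOn hanti.injOn Ioo_subset_Icc_self hsurj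
  have hg' := mapsTo_invFunOn_of_surjOn hmono.injOn Ioo_subset_Icc_self hsurj'
  have htends : ∀ x ∈ Icc p q, Tendsto (Function.invFunOn f (Icc p q))
      (𝓝[Ioo (f q) (f p)] (f x)) (𝓝[Ioo p q] x) := fun x hx =>
    tendsto_invFunOn_nhdsWithin_of_isCompact isCompact_Icc hf hanti.injOn hx
      Ioo_subset_Icc_self hsurj
  have htends' : ∀ x ∈ Icc q p', Tendsto (Function.invFunOn f (Icc q p'))
      (𝓝[Ioo (f q) (f p)] (f x)) (𝓝[Ioo q p'] x) := fun x hx =>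
    tendsto_invFunOn_nhdsWithin_of_isCompact isCompact_Icc hf' hmono.injOn hx
      Ioo_subset_Icc_self hsurj'
  have hsub := hsurj.mono Ioo_subset_Icc_self subset_rfl
  have hsub' := hsurj'.mono Ioo_subset_Icc_self subset_rfl
  rw [← nhdsWithin_Ioo_eq_nhdsGT hpq] at hp
  rw [← nhdsWithin_Ioo_eq_nhdsLT hpq] at hq
  rw [← nhdsWithin_Ioo_eq_nhdsGT hqp'] at hq'
  rw [← nhdsWithin_Ioo_eq_nhdsLT hqp'] at hp'
  refine ⟨hφ.comp (strictAntiOn_invFunOn hanti hsub) hg,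
    hφ'.comp_strictMonoOn (strictMonoOn_invFunOn hmono hsub') hg', ?_, ?_⟩
  · rw [← nhdsWithin_Ioo_eq_nhdsGT hr]
    exact ((htends q (right_mem_Icc.2 hpq.le)).eventually hq).and
      ((htends' q (left_mem_Icc.2 hqp'.le)).eventually hq')
  · rw [← nhdsWithin_Ioo_eq_nhdsLT hr]
    exact ((htends p (left_mem_Icc.2 hpq.le)).eventually hp).and
      ((hpp' ▸ htends' p' (right_mem_Icc.2 hqp'.le)).eventually hp')

end Shooting

section GapTriples

/-- A triple `0 < x 0 < x 1 < x 2` whose upper gap is `r` times its lower gap. -/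
structure IsGapTriple (r : ℝ) (x : Fin 3 → ℝ) : Prop where
  ratio_pos : 0 < r
  pos : 0 < x 0
  lt : x 0 < x 1
  gap : x 2 - x 1 = r * (x 1 - x 0)

/-- The sum of the two lower entries of a triple measured in units of its lower gap; together with
the ratio of the gaps it determines the triple up to scaling. -/
noncomputable def relativeSum (x : Fin 3 → ℝ) : ℝ := (x 0 + x 1) / (x 1 - x 0)

/-- The quotient of the consecutive differences of the squares of a triple. -/
noncomputable def sqGapRatio (x : Fin 3 → ℝ) : ℝ := (x 2 ^ 2 - x 1 ^ 2) / (x 1 ^ 2 - x 0 ^ 2)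

/-- The factor `ρ` in the equation `r' = -A ρ` satisfied by the ratio `r` of the gaps between three
solutions of `z' = -B - A / z`. -/
noncomputable def gapRatioRate (r : ℝ) (x : Fin 3 → ℝ) : ℝ :=
  r * (1 + r) * (x 1 - x 0) / (x 0 * x 1 * x 2)

namespace IsGapTriple

variable {r : ℝ} {x y : Fin 3 → ℝ}

theorem gap_pos (hx : IsGapTriple r x) : 0 < x 1 - x 0 := sub_pos.2 hx.lt

theorem pos_one (hx : IsGapTriple r x) : 0 < x 1 := hx.pos.trans hx.lt

theorem eq_two (hx : IsGapTriple r x) : x 2 = x 1 + r * (x 1 - x 0) := by linarith [hx.gap]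

theorem pos_two (hx : IsGapTriple r x) : 0 < x 2 := by
  rw [hx.eq_two]
  exact add_pos hx.pos_one (mul_pos hx.ratio_pos hx.gap_pos)

theorem prod_pos (hx : IsGapTriple r x) : 0 < x 0 * x 1 * x 2 :=
  mul_pos (mul_pos hx.pos hx.pos_one) hx.pos_two

theorem sq_sub_sq_pos (hx : IsGapTriple r x) : 0 < x 1 ^ 2 - x 0 ^ 2 :=
  sub_pos.2 (pow_lt_pow_left₀ hx.lt hx.pos.le two_ne_zero)

theorem gapRatioRate_pos (hx : IsGapTriple r x) : 0 < gapRatioRate r x := by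
  have := hx.ratio_pos
  have := hx.gap_pos
  have := hx.prod_pos
  rw [gapRatioRate]
  positivity

theorem gap_lt_gap (hx : IsGapTriple r x) (hy : IsGapTriple r y)
    (h : (y 2 - y 1) * (y 2 - y 0) < (x 2 - x 1) * (x 2 - x 0)) : y 1 - y 0 < x 1 - x 0 := by
  have heq : ∀ {w : Fin 3 → ℝ}, IsGapTriple r w →
      (w 2 - w 1) * (w 2 - w 0) = r * (1 + r) * (w 1 - w 0) ^ 2 := fun hw => by
    rw [hw.eq_two]
    ring
  have hr := hx.ratio_pos
  rw [heq hx, heq hy] at h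
  exact lt_of_pow_lt_pow_left₀ 2 hx.gap_pos.le (lt_of_mul_lt_mul_left h (by positivity))

/-- In terms of the lower gap `u`, the sum `s` and the product `M = s u`, eight times the product
of the triple is `s ^ 3 + (1 + 2 r) M s - M u - (1 + 2 r) u ^ 3`. -/
theorem prod_lt_prod (hx : IsGapTriple r x) (hy : IsGapTriple r y)
    (hsq : x 1 ^ 2 - x 0 ^ 2 = y 1 ^ 2 - y 0 ^ 2) (hgap : y 1 - y 0 < x 1 - x 0) :
    x 0 * x 1 * x 2 < y 0 * y 1 * y 2 := by
  have hprod : ∀ {w : Fin 3 → ℝ}, IsGapTriple r w → 8 * (w 0 * w 1 * w 2) =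
      (w 0 + w 1) ^ 3 + (1 + 2 * r) * (w 1 ^ 2 - w 0 ^ 2) * (w 0 + w 1)
        - (w 1 ^ 2 - w 0 ^ 2) * (w 1 - w 0) - (1 + 2 * r) * (w 1 - w 0) ^ 3 := fun hw => by
    rw [hw.eq_two]
    ring
  have hsum : x 0 + x 1 < y 0 + y 1 := by
    have hlt : (x 0 + x 1) * (y 1 - y 0) < (y 0 + y 1) * (y 1 - y 0) := calc
      (x 0 + x 1) * (y 1 - y 0) < (x 0 + x 1) * (x 1 - x 0) :=
        mul_lt_mul_of_pos_left hgap (add_pos hx.pos hx.pos_one)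
      _ = (y 0 + y 1) * (y 1 - y 0) := by linear_combination hsq
    exact lt_of_mul_lt_mul_right hlt hy.gap_pos.le
  have hr := hx.ratio_pos
  have hM := hy.sq_sub_sq_pos
  have hs := add_pos hx.pos hx.pos_one
  have hv := hy.gap_pos
  have h₁ : (x 0 + x 1) ^ 3 < (y 0 + y 1) ^ 3 := by gcongr
  have h₂ : (1 + 2 * r) * (y 1 ^ 2 - y 0 ^ 2) * (x 0 + x 1) <
    (1 + 2 * r) * (y 1 ^ 2 - y 0 ^ 2) * (y 0 + y 1) := by gcongr
  have h₃ : (y 1 ^ 2 - y 0 ^ 2) * (y 1 - y 0) < (y 1 ^ 2 - y 0 ^ 2) * (x 1 - x 0) := by gcongr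
  have h₄ : (1 + 2 * r) * (y 1 - y 0) ^ 3 < (1 + 2 * r) * (x 1 - x 0) ^ 3 := by gcongr
  have hPx := hprod hx
  rw [hsq] at hPx
  linarith [hprod hy]

theorem relativeSum_pos (hx : IsGapTriple r x) : 0 < relativeSum x :=
  div_pos (add_pos hx.pos hx.pos_one) hx.gap_pos

theorem one_lt_relativeSum (hx : IsGapTriple r x) : 1 < relativeSum x :=
  (one_lt_div hx.gap_pos).2 (by linarith [hx.pos])

theorem sqGapRatio_eq (hx : IsGapTriple r x) :
    sqGapRatio x = r + r * (1 + r) / relativeSum x := by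
  have hu := hx.gap_pos.ne'
  have hs := (add_pos hx.pos hx.pos_one).ne'
  rw [sqGapRatio, relativeSum, hx.eq_two,
    show x 1 ^ 2 - x 0 ^ 2 = (x 0 + x 1) * (x 1 - x 0) by ring]
  field_simp
  ring

theorem div_gap_eq (hx : IsGapTriple r x) :
    x 2 / (x 1 - x 0) = (relativeSum x + (1 + 2 * r)) / 2 := by
  have hu := hx.gap_pos.ne'
  rw [relativeSum, hx.eq_two]
  field_simp
  ring

theorem two_mul_prod_div_sq_eq (hx : IsGapTriple r x) :
    2 * (x 0 * x 1 * x 2) / (x 0 + x 1) ^ 2 =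
      (relativeSum x ^ 2 - 1) * (relativeSum x + (1 + 2 * r)) / (4 * relativeSum x ^ 2) *
        (x 1 - x 0) := by
  have hu := hx.gap_pos.ne'
  have hs := (add_pos hx.pos hx.pos_one).ne'
  rw [relativeSum, hx.eq_two]
  field_simp
  ring

theorem div_gap_lt_div_gap (hx : IsGapTriple r x) (hy : IsGapTriple r y)
    (h : sqGapRatio y < sqGapRatio x) : x 2 / (x 1 - x 0) < y 2 / (y 1 - y 0) := by
  have hr := hx.ratio_pos
  rw [hx.sqGapRatio_eq, hy.sqGapRatio_eq, add_lt_add_iff_left,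
    div_lt_div_iff_of_pos_left (by positivity) hy.relativeSum_pos hx.relativeSum_pos] at h
  rw [hx.div_gap_eq, hy.div_gap_eq]
  gcongr

theorem two_mul_prod_div_sq_lt (hx : IsGapTriple r x) (hy : IsGapTriple r y)
    (h : sqGapRatio y = sqGapRatio x) (hgap : y 1 - y 0 < x 1 - x 0) :
    2 * (y 0 * y 1 * y 2) / (y 0 + y 1) ^ 2 < 2 * (x 0 * x 1 * x 2) / (x 0 + x 1) ^ 2 := by
  have hr := hx.ratio_pos
  have hσ : relativeSum y = relativeSum x := by
    rw [hx.sqGapRatio_eq, hy.sqGapRatio_eq, add_right_inj, div_eq_div_iff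
      hy.relativeSum_pos.ne' hx.relativeSum_pos.ne', mul_right_inj' (by positivity)] at h
    exact h.symm
  have hσ₁ := hx.one_lt_relativeSum
  have hσ₂ : 0 < relativeSum x ^ 2 - 1 := sub_pos.2 (one_lt_pow₀ hσ₁ two_ne_zero)
  rw [hx.two_mul_prod_div_sq_eq, hy.two_mul_prod_div_sq_eq, hσ]
  gcongr

end IsGapTriple

end GapTriples

section Branches

/-- Three ordered solutions of `z' = -B - A / z` on an interval where the ratio `t` of their gaps
is monotone, with `t` as independent variable; `β` is the quotient `B / A`. -/
structure IsGapRatioBranch (r₀ r₁ : ℝ) (β : ℝ → ℝ) (m : Fin 3 → ℝ → ℝ) : Prop where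
  continuousOn_slope : ContinuousOn β (Ioo r₀ r₁)
  continuousOn : ∀ i, ContinuousOn (m i) (Icc r₀ r₁)
  triple : ∀ t ∈ Icc r₀ r₁, IsGapTriple t fun i => m i t
  hasDerivAt : ∀ i, ∀ t ∈ Ioo r₀ r₁,
    HasDerivAt (m i) ((β t + 1 / m i t) / gapRatioRate t fun j => m j t) t

namespace IsGapRatioBranch

variable {r₀ r₁ s t : ℝ} {β γ : ℝ → ℝ} {m n : Fin 3 → ℝ → ℝ}

theorem triple_of_mem_Ioo (h : IsGapRatioBranch r₀ r₁ β m) (ht : t ∈ Ioo r₀ r₁) :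
    IsGapTriple t fun i => m i t :=
  h.triple t (Ioo_subset_Icc_self ht)

theorem continuousOn_log_gap (h : IsGapRatioBranch r₀ r₁ β m) :
    ContinuousOn (fun t => Real.log (m 1 t - m 0 t)) (Icc r₀ r₁) :=
  ((h.continuousOn 1).sub (h.continuousOn 0)).log fun t ht => (h.triple t ht).gap_pos.ne'

theorem continuousOn_sqGapRatio (h : IsGapRatioBranch r₀ r₁ β m) :
    ContinuousOn (fun t => sqGapRatio fun i => m i t) (Icc r₀ r₁) :=
  (((h.continuousOn 2).pow 2).sub ((h.continuousOn 1).pow 2)).div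
    (((h.continuousOn 1).pow 2).sub ((h.continuousOn 0).pow 2))
    fun t ht => (h.triple t ht).sq_sub_sq_pos.ne'

theorem hasDerivAt_mul_gap (h : IsGapRatioBranch r₀ r₁ β m) (ht : t ∈ Ioo r₀ r₁) :
    HasDerivAt (fun t => (m 2 t - m 1 t) * (m 2 t - m 0 t)) (-(m 1 t ^ 2 - m 0 t ^ 2)) t := by
  have hd := fun i => h.hasDerivAt i t ht
  have hx := h.triple_of_mem_Ioo ht
  refine (((hd 2).sub (hd 1)).mul ((hd 2).sub (hd 0))).congr_deriv ?_
  have ⟨h₀, h₁, h₂⟩ : 0 < m 0 t ∧ 0 < m 1 t ∧ 0 < m 2 t := ⟨hx.pos, hx.pos_one, hx.pos_two⟩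
  have hr := hx.ratio_pos
  have hu := hx.gap_pos
  have h₁₂ := hx.eq_two
  simp only [gapRatioRate, Pi.sub_apply] at *
  generalize m 0 t = x₀, m 1 t = x₁, m 2 t = x₂ at *
  subst h₁₂
  have hr' : 1 + t ≠ 0 := by positivity
  field_simp
  ring

theorem hasDerivAt_sq_sub_sq (h : IsGapRatioBranch r₀ r₁ β m) (ht : t ∈ Ioo r₀ r₁) :
    HasDerivAt (fun t => m 1 t ^ 2 - m 0 t ^ 2)
      (β t * (2 / (t * (1 + t)) * (m 0 t * m 1 t * m 2 t))) t := by
  have hd := fun i => h.hasDerivAt i t ht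
  have hx := h.triple_of_mem_Ioo ht
  refine (((hd 1).fun_pow 2).fun_sub ((hd 0).fun_pow 2)).congr_deriv ?_
  have ⟨h₀, h₁⟩ : 0 < m 0 t ∧ 0 < m 1 t := ⟨hx.pos, hx.pos_one⟩
  have hr := hx.ratio_pos
  have hu := hx.gap_pos
  have hr' : 1 + t ≠ 0 := by positivity
  rw [gapRatioRate]
  field_simp
  ring

theorem hasDerivAt_sqGapRatio (h : IsGapRatioBranch r₀ r₁ β m) (ht : t ∈ Ioo r₀ r₁) :
    HasDerivAt (fun t => sqGapRatio fun i => m i t)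
      (-β t * (2 * (m 0 t * m 1 t * m 2 t) / (m 0 t + m 1 t) ^ 2)) t := by
  have hd := fun i => h.hasDerivAt i t ht
  have hx := h.triple_of_mem_Ioo ht
  refine ((((hd 2).fun_pow 2).fun_sub ((hd 1).fun_pow 2)).fun_div
    (((hd 1).fun_pow 2).fun_sub ((hd 0).fun_pow 2)) hx.sq_sub_sq_pos.ne').congr_deriv ?_
  have ⟨h₀, h₁, h₂⟩ : 0 < m 0 t ∧ 0 < m 1 t ∧ 0 < m 2 t := ⟨hx.pos, hx.pos_one, hx.pos_two⟩
  have hr := hx.ratio_pos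
  have hu := hx.gap_pos
  have h₁₂ := hx.eq_two
  simp only [gapRatioRate] at *
  generalize m 0 t = x₀, m 1 t = x₁, m 2 t = x₂ at *
  subst h₁₂
  have hr' : 1 + t ≠ 0 := by positivity
  rw [show x₁ ^ 2 - x₀ ^ 2 = (x₁ - x₀) * (x₀ + x₁) by ring]
  field_simp
  ring

theorem hasDerivAt_log_gap (h : IsGapRatioBranch r₀ r₁ β m) (ht : t ∈ Ioo r₀ r₁) :
    HasDerivAt (fun t => Real.log (m 1 t - m 0 t))
      (-(1 / (t * (1 + t)) * (m 2 t / (m 1 t - m 0 t)))) t := by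
  have hd := fun i => h.hasDerivAt i t ht
  have hx := h.triple_of_mem_Ioo ht
  refine (((hd 1).fun_sub (hd 0)).log hx.gap_pos.ne').congr_deriv ?_
  have ⟨h₀, h₁⟩ : 0 < m 0 t ∧ 0 < m 1 t := ⟨hx.pos, hx.pos_one⟩
  have hr := hx.ratio_pos
  have hu := hx.gap_pos
  have hr' : 1 + t ≠ 0 := by positivity
  rw [gapRatioRate]
  field_simp
  ring

/-- The triple of `m` beats that of `n` through `(m 2 - m 1) * (m 2 - m 0)`, which is controlled by
`m 1 ^ 2 - m 0 ^ 2`. -/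
theorem false_of_crossing_nonneg (hm : IsGapRatioBranch r₀ r₁ β m)
    (hn : IsGapRatioBranch r₀ r₁ γ n) (h : IsSlopeCrossing r₀ r₁ β γ)
    (hmn : ∀ i, EqOn (m i) (n i) {r₀, r₁}) (hs : s ∈ Ioo r₀ r₁) (hβγ : β s = γ s)
    (hnonneg : 0 ≤ β s) : False := by
  have hmc := hm.continuousOn
  have hnc := hn.continuousOn
  have hweight : ∀ t ∈ Ioo r₀ r₁, 0 < 2 / (t * (1 + t)) := fun t ht => by
    have := (hm.triple_of_mem_Ioo ht).ratio_pos
    positivity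
  refine h.false_of_shooting hs hβγ hnonneg
    (D := fun t => (m 2 t - m 1 t) * (m 2 t - m 0 t) - (n 2 t - n 1 t) * (n 2 t - n 0 t))
    (G := fun t => (n 1 t ^ 2 - n 0 t ^ 2) - (m 1 t ^ 2 - m 0 t ^ 2))
    (P := fun t => 2 / (t * (1 + t)) * (m 0 t * m 1 t * m 2 t))
    (Q := fun t => 2 / (t * (1 + t)) * (n 0 t * n 1 t * n 2 t))
    (by fun_prop) (by fun_prop) (fun t ht => ?_) (fun t ht => ?_)
    (fun t ht => (hm.hasDerivAt_mul_gap ht).sub (hn.hasDerivAt_mul_gap ht))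
    (fun t ht => (hn.hasDerivAt_sq_sub_sq ht).sub (hm.hasDerivAt_sq_sub_sq ht))
    (fun _ _ hG => by linarith)
    (fun t ht => mul_pos (hweight t ht) (hm.triple_of_mem_Ioo ht).prod_pos)
    (fun t ht => mul_pos (hweight t ht) (hn.triple_of_mem_Ioo ht).prod_pos)
    (fun t ht hG hD => ?_) (fun t ht hG hD => ?_)
  · simp [hmn _ ht]
  · simp [hmn _ ht]
  · have hmt := hm.triple_of_mem_Ioo ht
    have hnt := hn.triple_of_mem_Ioo ht
    exact mul_lt_mul_of_pos_left (hmt.prod_lt_prod hnt (sub_eq_zero.1 hG).symm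
      (hmt.gap_lt_gap hnt (sub_pos.1 hD))) (hweight t ht)
  · have hmt := hm.triple_of_mem_Ioo ht
    have hnt := hn.triple_of_mem_Ioo ht
    exact mul_lt_mul_of_pos_left (hnt.prod_lt_prod hmt (sub_eq_zero.1 hG)
      (hnt.gap_lt_gap hmt (sub_neg.1 hD))) (hweight t ht)

/-- The scale-invariant counterpart of `false_of_crossing_nonneg`: now `log (m 1 - m 0)` is
controlled by `sqGapRatio`, in whose derivative the slope occurs with the opposite sign. -/
theorem false_of_crossing_nonpos (hm : IsGapRatioBranch r₀ r₁ β m)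
    (hn : IsGapRatioBranch r₀ r₁ γ n) (h : IsSlopeCrossing r₀ r₁ β γ)
    (hmn : ∀ i, EqOn (m i) (n i) {r₀, r₁}) (hs : s ∈ Ioo r₀ r₁) (hβγ : β s = γ s)
    (hnonpos : β s ≤ 0) : False := by
  have hweight : ∀ {x : Fin 3 → ℝ} {t : ℝ}, IsGapTriple t x →
      0 < 2 * (x 0 * x 1 * x 2) / (x 0 + x 1) ^ 2 := fun hx =>
    div_pos (mul_pos two_pos hx.prod_pos) (pow_pos (add_pos hx.pos hx.pos_one) 2)
  refine h.neg_swap.false_of_shooting hs (neg_inj.2 hβγ.symm)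
    (neg_nonneg.2 (hβγ ▸ hnonpos))
    (D := fun t => Real.log (m 1 t - m 0 t) - Real.log (n 1 t - n 0 t))
    (G := fun t => (sqGapRatio fun i => m i t) - sqGapRatio fun i => n i t)
    (P := fun t => 2 * (n 0 t * n 1 t * n 2 t) / (n 0 t + n 1 t) ^ 2)
    (Q := fun t => 2 * (m 0 t * m 1 t * m 2 t) / (m 0 t + m 1 t) ^ 2)
    (hm.continuousOn_log_gap.sub hn.continuousOn_log_gap)
    (hm.continuousOn_sqGapRatio.sub hn.continuousOn_sqGapRatio)
    (fun t ht => ?_) (fun t ht => ?_)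
    (fun t ht => (hm.hasDerivAt_log_gap ht).sub (hn.hasDerivAt_log_gap ht))
    (fun t ht => (hm.hasDerivAt_sqGapRatio ht).sub (hn.hasDerivAt_sqGapRatio ht))
    (fun t ht hG => ?_) (fun t ht => hweight (hn.triple_of_mem_Ioo ht))
    (fun t ht => hweight (hm.triple_of_mem_Ioo ht)) (fun t ht hG hD => ?_) (fun t ht hG hD => ?_)
  · simp [hmn _ ht]
  · simp [hmn _ ht]
  · have hmt := hm.triple_of_mem_Ioo ht
    have hr := hmt.ratio_pos
    rw [neg_sub_neg, sub_pos]
    exact mul_lt_mul_of_pos_left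
      (hmt.div_gap_lt_div_gap (hn.triple_of_mem_Ioo ht) (sub_pos.1 hG)) (by positivity)
  · have hmt := hm.triple_of_mem_Ioo ht
    have hnt := hn.triple_of_mem_Ioo ht
    exact hmt.two_mul_prod_div_sq_lt hnt (sub_eq_zero.1 hG).symm
      ((Real.log_lt_log_iff hnt.gap_pos hmt.gap_pos).1 (sub_pos.1 hD))
  · have hmt := hm.triple_of_mem_Ioo ht
    have hnt := hn.triple_of_mem_Ioo ht
    exact hnt.two_mul_prod_div_sq_lt hmt (sub_eq_zero.1 hG)
      ((Real.log_lt_log_iff hmt.gap_pos hnt.gap_pos).1 (sub_neg.1 hD))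

theorem false_of_isSlopeCrossing (hm : IsGapRatioBranch r₀ r₁ β m)
    (hn : IsGapRatioBranch r₀ r₁ γ n) (h : IsSlopeCrossing r₀ r₁ β γ) (hr : r₀ < r₁)
    (hmn : ∀ i, EqOn (m i) (n i) {r₀, r₁}) : False := by
  obtain ⟨s, hs, hβγ⟩ := h.exists_eq hr hm.continuousOn_slope hn.continuousOn_slope
  rcases le_total 0 (β s) with hnonneg | hnonpos
  · exact hm.false_of_crossing_nonneg hn h hmn hs hβγ hnonneg
  · exact hm.false_of_crossing_nonpos hn h hmn hs hβγ hnonpos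

end IsGapRatioBranch

end Branches

section LienardOrbits

/-- A nowhere zero solution `z` of `z' = -B - A / z`: the velocity, as a function of the position,
along an orbit of `x'' + B x * x' + A x = 0`. -/
structure IsLienardOrbit (A B z : ℝ → ℝ) : Prop where
  ne_zero : ∀ x, z x ≠ 0
  hasDerivAt : ∀ x, HasDerivAt z (-B x - A x / z x) x

namespace IsLienardOrbit

variable {A B z w : ℝ → ℝ} {T : ℝ}

theorem continuous (hz : IsLienardOrbit A B z) : Continuous z :=
  continuous_iff_continuousAt.2 fun x => (hz.hasDerivAt x).continuousAt

theorem pos_or_neg (hz : IsLienardOrbit A B z) : (∀ x, 0 < z x) ∨ ∀ x, z x < 0 := by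
  by_contra! hcon
  obtain ⟨⟨x, hx⟩, y, hy⟩ := hcon
  obtain ⟨t, ht⟩ := mem_range_of_exists_le_of_exists_ge hz.continuous ⟨x, hx⟩ ⟨y, hy⟩
  exact hz.ne_zero t ht

theorem lt_or_gt (hz : IsLienardOrbit A B z) (hw : IsLienardOrbit A B w) (hA : Continuous A)
    (hne : z ≠ w) : (∀ x, z x < w x) ∨ ∀ x, w x < z x := by
  have hk : Continuous fun x => A x / (z x * w x) :=
    hA.div (hz.continuous.mul hw.continuous) fun x => mul_ne_zero (hz.ne_zero x) (hw.ne_zero x)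
  have hd : ∀ x, HasDerivAt (fun x => w x - z x) (A x / (z x * w x) * (w x - z x)) x :=
    fun x => ((hw.hasDerivAt x).sub (hz.hasDerivAt x)).congr_deriv (by
      have := hz.ne_zero x
      have := hw.ne_zero x
      field_simp
      ring)
  by_contra! hcon
  obtain ⟨⟨x, hx⟩, y, hy⟩ := hcon
  obtain ⟨t, ht⟩ := mem_range_of_exists_le_of_exists_ge (hw.continuous.sub hz.continuous)
    ⟨x, sub_nonpos.2 hx⟩ ⟨y, sub_nonneg.2 hy⟩
  exact hne (funext fun u => (sub_eq_zero.1 (eq_zero_of_hasDerivAt_mul_self hk hd ht u)).symm)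

theorem exists_perm_strictMono {n : ℕ} {z : Fin n → ℝ → ℝ} (hz : ∀ i, IsLienardOrbit A B (z i))
    (hA : Continuous A) (hinj : Function.Injective z) :
    ∃ σ : Equiv.Perm (Fin n), ∀ x, StrictMono fun i => z (σ i) x := by
  refine ⟨Tuple.sort fun i => z i 0, fun x i j hij => ?_⟩
  rcases (hz _).lt_or_gt (hz _) hA (hinj.ne ((Equiv.injective _).ne hij.ne)) with hlt | hlt
  · exact hlt x
  · exact absurd (Tuple.monotone_sort (fun i => z i 0) hij.le) (hlt 0).not_ge

end IsLienardOrbit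

/-- The quotient of the upper gap by the lower gap of three functions. -/
noncomputable def gapRatio (z : Fin 3 → ℝ → ℝ) (x : ℝ) : ℝ := (z 2 x - z 1 x) / (z 1 x - z 0 x)

/-- Three positive solutions of `z' = -B - A / z`, in increasing order. -/
structure IsOrbitTriple (A B : ℝ → ℝ) (z : Fin 3 → ℝ → ℝ) : Prop where
  orbit : ∀ i, IsLienardOrbit A B (z i)
  pos : ∀ x, 0 < z 0 x
  strictMono : ∀ x, StrictMono fun i => z i x

namespace IsOrbitTriple

variable {A B : ℝ → ℝ} {z : Fin 3 → ℝ → ℝ} {p q p' r₀ r₁ : ℝ}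

theorem gap_pos (h : IsOrbitTriple A B z) (x : ℝ) : 0 < z 1 x - z 0 x :=
  sub_pos.2 (h.strictMono x (by decide))

theorem isGapTriple (h : IsOrbitTriple A B z) (x : ℝ) :
    IsGapTriple (gapRatio z x) fun i => z i x where
  ratio_pos := div_pos (sub_pos.2 (h.strictMono x (by decide))) (h.gap_pos x)
  pos := h.pos x
  lt := h.strictMono x (by decide)
  gap := (div_mul_cancel₀ _ (h.gap_pos x).ne').symm

theorem hasDerivAt_gapRatio (h : IsOrbitTriple A B z) (x : ℝ) :
    HasDerivAt (gapRatio z) (-A x * gapRatioRate (gapRatio z x) fun i => z i x) x := by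
  have hd := fun i => (h.orbit i).hasDerivAt x
  have hu := h.gap_pos x
  have h₀ := (h.orbit 0).ne_zero x
  have h₁ := (h.orbit 1).ne_zero x
  have h₂ := (h.orbit 2).ne_zero x
  refine (((hd 2).fun_sub (hd 1)).fun_div ((hd 1).fun_sub (hd 0)) hu.ne').congr_deriv ?_
  rw [gapRatioRate, gapRatio]
  field_simp
  ring

theorem continuous_gapRatio (h : IsOrbitTriple A B z) : Continuous (gapRatio z) :=
  continuous_iff_continuousAt.2 fun x => (h.hasDerivAt_gapRatio x).continuousAt

theorem strictAntiOn_gapRatio (h : IsOrbitTriple A B z) (hA : ∀ x ∈ Ioo p q, 0 < A x) :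
    StrictAntiOn (gapRatio z) (Icc p q) := by
  refine strictAntiOn_of_deriv_neg (convex_Icc p q) h.continuous_gapRatio.continuousOn
    fun x hx => ?_
  rw [interior_Icc] at hx
  rw [(h.hasDerivAt_gapRatio x).deriv]
  exact mul_neg_of_neg_of_pos (neg_neg_of_pos (hA x hx)) (h.isGapTriple x).gapRatioRate_pos

theorem strictMonoOn_gapRatio (h : IsOrbitTriple A B z) (hA : ∀ x ∈ Ioo p q, A x < 0) :
    StrictMonoOn (gapRatio z) (Icc p q) := by
  refine strictMonoOn_of_deriv_pos (convex_Icc p q) h.continuous_gapRatio.continuousOn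
    fun x hx => ?_
  rw [interior_Icc] at hx
  rw [(h.hasDerivAt_gapRatio x).deriv]
  exact mul_pos (neg_pos.2 (hA x hx)) (h.isGapTriple x).gapRatioRate_pos

theorem isGapRatioBranch (h : IsOrbitTriple A B z) (hA : Continuous A) (hB : Continuous B)
    (hinj : InjOn (gapRatio z) (Icc p q)) (hIcc : SurjOn (gapRatio z) (Icc p q) (Icc r₀ r₁))
    (hIoo : SurjOn (gapRatio z) (Ioo p q) (Ioo r₀ r₁)) (hA₀ : ∀ x ∈ Ioo p q, A x ≠ 0) :
    IsGapRatioBranch r₀ r₁ (fun t => B (Function.invFunOn (gapRatio z) (Icc p q) t) /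
        A (Function.invFunOn (gapRatio z) (Icc p q) t))
      (fun i t => z i (Function.invFunOn (gapRatio z) (Icc p q) t)) := by
  have hgc : ContinuousOn (Function.invFunOn (gapRatio z) (Icc p q)) (Icc r₀ r₁) :=
    (continuousOn_invFunOn_of_isCompact isCompact_Icc h.continuous_gapRatio.continuousOn
      hinj).mono hIcc
  refine ⟨?_, fun i => (h.orbit i).continuous.comp_continuousOn hgc, fun t ht => ?_,
    fun i t ht => ?_⟩
  · exact (hB.comp_continuousOn (hgc.mono Ioo_subset_Icc_self)).div
      (hA.comp_continuousOn (hgc.mono Ioo_subset_Icc_self))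
      fun t ht => hA₀ _ (mapsTo_invFunOn_of_surjOn hinj Ioo_subset_Icc_self hIoo ht)
  · have ht' := h.isGapTriple (Function.invFunOn (gapRatio z) (Icc p q) t)
    rwa [hIcc.rightInvOn_invFunOn ht] at ht'
  · obtain ⟨x, hx, rfl⟩ := hIoo ht
    have hxI : x ∈ Icc p q := Ioo_subset_Icc_self hx
    have hAx := hA₀ x hx
    have hρ := (h.isGapTriple x).gapRatioRate_pos
    have hzx := (h.orbit i).ne_zero x
    have hg := hasDerivAt_invFunOn_of_isCompact isCompact_Icc
      h.continuous_gapRatio.continuousOn hinj hxI (h.hasDerivAt_gapRatio x)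
      (mul_ne_zero (neg_ne_zero.2 hAx) hρ.ne') (mem_of_superset (Icc_mem_nhds ht.1 ht.2) hIcc)
    have hgx := hinj.leftInvOn_invFunOn hxI
    refine (HasDerivAt.comp _ (hgx.symm ▸ (h.orbit i).hasDerivAt x) hg).congr_deriv ?_
    rw [hgx]
    field_simp
    ring

/-- As the gap ratio decreases on `[p, q]` and increases back on `[q, p']`, the two pieces are
branches over the same interval of gap ratios, with the same endpoints and crossing slopes. -/
theorem exists_ne_of_strictAntiOn_div (h : IsOrbitTriple A B z) (hpq : p < q) (hqp' : q < p')
    (hA : Continuous A) (hB : Continuous B) (hApos : ∀ x ∈ Ioo p q, 0 < A x)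
    (hAneg : ∀ x ∈ Ioo q p', A x < 0) (hanti : StrictAntiOn (fun x => B x / A x) (Ioo p q))
    (hanti' : StrictAntiOn (fun x => B x / A x) (Ioo q p')) (hBp : 0 < B p) (hBq : B q < 0)
    (hBp' : 0 < B p') : ∃ i, z i p' ≠ z i p := by
  by_contra! hper
  have hR (s : Set ℝ) : ContinuousOn (gapRatio z) s := h.continuous_gapRatio.continuousOn
  have hRanti := h.strictAntiOn_gapRatio hApos
  have hRmono := h.strictMonoOn_gapRatio hAneg
  have hRp : gapRatio z p' = gapRatio z p := by simp only [gapRatio, hper]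
  have hp := left_mem_Icc.2 hpq.le
  have hq := right_mem_Icc.2 hpq.le
  have hbranch := h.isGapRatioBranch hA hB hRanti.injOn (intermediate_value_Icc' hpq.le (hR _))
    (intermediate_value_Ioo' hpq.le (hR _)) fun x hx => (hApos x hx).ne'
  have hbranch' := h.isGapRatioBranch hA hB hRmono.injOn (intermediate_value_Icc hqp'.le (hR _))
    (intermediate_value_Ioo hqp'.le (hR _)) fun x hx => (hAneg x hx).ne
  rw [hRp] at hbranch'
  refine hbranch.false_of_isSlopeCrossing hbranch' (isSlopeCrossing_comp_invFunOn hpq hqp'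
    (hR _) (hR _) hRanti hRmono hRp hanti hanti' ?_ ?_ ?_ ?_) (hRanti hp hq hpq) ?_
  · filter_upwards [nhdsWithin_le_nhds (hB.continuousAt.eventually_const_lt hBp),
      Ioo_mem_nhdsGT hpq] with x hBx hx using div_pos hBx (hApos x hx)
  · filter_upwards [nhdsWithin_le_nhds (hB.continuousAt.eventually_lt_const hBq),
      Ioo_mem_nhdsLT hpq] with x hBx hx using div_neg_of_neg_of_pos hBx (hApos x hx)
  · filter_upwards [nhdsWithin_le_nhds (hB.continuousAt.eventually_lt_const hBq),
      Ioo_mem_nhdsGT hqp'] with x hBx hx using div_pos_of_neg_of_neg hBx (hAneg x hx)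
  · filter_upwards [nhdsWithin_le_nhds (hB.continuousAt.eventually_const_lt hBp'),
      Ioo_mem_nhdsLT hqp'] with x hBx hx using div_neg_of_pos_of_neg hBx (hAneg x hx)
  · have hinvq := hRanti.injOn.leftInvOn_invFunOn hq
    have hinvp := hRanti.injOn.leftInvOn_invFunOn hp
    have hinvq' := hRmono.injOn.leftInvOn_invFunOn (left_mem_Icc.2 hqp'.le)
    have hinvp' := hRmono.injOn.leftInvOn_invFunOn (right_mem_Icc.2 hqp'.le)
    rw [hRp] at hinvp'
    rintro i t (rfl | rfl)
    · simp only [hinvq, hinvq']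
    · simp only [hinvp, hinvp', hper]

end IsOrbitTriple

end LienardOrbits

section PeriodicOrbits

namespace IsLienardOrbit

variable {A A' B z w : ℝ → ℝ} {T a b c : ℝ}

theorem not_forall_lt_of_combination_nonneg (hz : IsLienardOrbit A B z)
    (hw : IsLienardOrbit A B w) (hT : 0 < T) (hzT : Function.Periodic z T)
    (hwT : Function.Periodic w T) (hpos : ∀ x, 0 < z x) {α l : ℝ} (hα : 0 ≤ α) (hl : 0 ≤ l)
    (hαl : 0 < α + l) (hN : ∀ x, 0 ≤ α * B x - l * A x) {x₀ : ℝ}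
    (hx₀ : 0 < α * B x₀ - l * A x₀) : ¬ ∀ x, z x < w x := fun hlt => by
  have hden : ∀ u ∈ Ioi (0 : ℝ), 0 < α + l * u := fun u (hu : 0 < u) => by
    rcases hα.eq_or_lt with rfl | hα'
    · have : 0 < l := by simpa using hαl
      positivity
    · positivity
  have hwpos : ∀ x, 0 < w x := fun x => (hpos x).trans (hlt x)
  obtain ⟨Φ, hΦ⟩ := exists_hasDerivAt_of_continuousOn_Ioi (a := 0) (f := fun u => u / (α + l * u))
    (continuousOn_id.div (by fun_prop) fun u hu => (hden u hu).ne')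
  have hv : ∀ {v : ℝ → ℝ}, IsLienardOrbit A B v → (∀ x, 0 < v x) → ∀ x,
      HasDerivAt (fun x => Φ (v x)) (-((B x * v x + A x) / (α + l * v x))) x := fun hv hv₀ x =>
    ((hΦ _ (hv₀ x)).comp x (hv.hasDerivAt x)).congr_deriv (by
      have := hv.ne_zero x
      field_simp
      ring)
  have hd : ∀ x, HasDerivAt (fun x => Φ (w x) - Φ (z x)) (-((α * B x - l * A x) *
      ((w x - z x) / ((α + l * w x) * (α + l * z x))))) x := fun x =>
    ((hv hw hwpos x).fun_sub (hv hz hpos x)).congr_deriv (by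
      rw [neg_sub_neg, div_sub_div _ _ (hden _ (hpos x)).ne' (hden _ (hwpos x)).ne',
        mul_comm (α + l * w x), ← mul_div_assoc, ← neg_div]
      ring)
  have hq : ∀ x, 0 < (w x - z x) / ((α + l * w x) * (α + l * z x)) := fun x =>
    div_pos (sub_pos.2 (hlt x)) (mul_pos (hden _ (hwpos x)) (hden _ (hpos x)))
  exact not_periodic_of_hasDerivAt_nonpos hT hd
    (fun x => neg_nonpos.2 (mul_nonneg (hN x) (hq x).le))
    (neg_neg_of_pos (mul_pos hx₀ (hq x₀))) fun x => by rw [hzT, hwT]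

theorem hasDerivAt_add_const_mul (hz : IsLienardOrbit A (fun x => b + c * A' x) z)
    (hA : ∀ x, HasDerivAt A (A' x) x) (x : ℝ) :
    HasDerivAt (fun x => z x + c * A x) (-b - A x / z x) x :=
  ((hz.hasDerivAt x).fun_add ((hA x).const_mul c)).congr_deriv (by ring)

theorem not_forall_lt_of_mul_pos (hz : IsLienardOrbit A (fun x => b + c * A' x) z)
    (hw : IsLienardOrbit A (fun x => b + c * A' x) w) (hA : ∀ x, HasDerivAt A (A' x) x)
    (hT : 0 < T) (hAT : Function.Periodic A T) (hzT : Function.Periodic z T)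
    (hwT : Function.Periodic w T) (hb : 0 < b) (hc : c ≤ 0) (hsign : ∀ x, 0 < z x * w x) :
    ¬ ∀ x, z x < w x := fun hlt => by
  have hd : ∀ x, HasDerivAt (fun x => (w x + c * A x) ^ 2 - (z x + c * A x) ^ 2)
      (-(2 * (w x - z x) * (b + -c * (A x ^ 2 / (z x * w x))))) x := fun x =>
    (((hw.hasDerivAt_add_const_mul hA x).fun_pow 2).fun_sub
      ((hz.hasDerivAt_add_const_mul hA x).fun_pow 2)).congr_deriv (by
        have := hz.ne_zero x
        have := hw.ne_zero x
        field_simp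
        ring)
  have hneg : ∀ x, -(2 * (w x - z x) * (b + -c * (A x ^ 2 / (z x * w x)))) < 0 := fun x => by
    have := sub_pos.2 (hlt x)
    have := hsign x
    have : 0 ≤ -c := neg_nonneg.2 hc
    exact neg_neg_of_pos (by positivity)
  exact not_periodic_of_hasDerivAt_nonpos hT hd (fun x => (hneg x).le) (hneg 0)
    fun x => by rw [hAT, hzT, hwT]

theorem eq_of_mul_pos (hz : IsLienardOrbit A (fun x => b + c * A' x) z)
    (hw : IsLienardOrbit A (fun x => b + c * A' x) w) (hA : ∀ x, HasDerivAt A (A' x) x)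
    (hT : 0 < T) (hAT : Function.Periodic A T) (hzT : Function.Periodic z T)
    (hwT : Function.Periodic w T) (hb : 0 < b) (hc : c ≤ 0) (hsign : ∀ x, 0 < z x * w x) :
    z = w := by
  by_contra hne
  rcases hz.lt_or_gt hw (continuous_iff_continuousAt.2 fun x => (hA x).continuousAt) hne
    with hlt | hlt
  · exact hz.not_forall_lt_of_mul_pos hw hA hT hAT hzT hwT hb hc hsign hlt
  · exact hw.not_forall_lt_of_mul_pos hz hA hT hAT hwT hzT hb hc
      (fun x => mul_comm (z x) (w x) ▸ hsign x) hlt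

theorem pos_of_periodic {Ψ : ℝ → ℝ} (hz : IsLienardOrbit A (fun x => b + c * A' x) z)
    (hA : ∀ x, HasDerivAt A (A' x) x) (hΨ : ∀ x, HasDerivAt Ψ (-(A x + a)) x) (hT : 0 < T)
    (hAT : Function.Periodic A T) (hΨT : Function.Periodic Ψ T) (hzT : Function.Periodic z T)
    (ha : 0 ≤ a) (hb : 0 < b) (hc : 0 ≤ c) (x : ℝ) : 0 < z x := by
  refine hz.pos_or_neg.resolve_right (fun hneg => ?_) x
  have hd : ∀ x, HasDerivAt (fun x => 2 * (1 + b * c) * Ψ x - (z x + c * A x) ^ 2)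
      (-(2 * (1 + b * c) * a + 2 * b * -z x + 2 * c * (A x ^ 2 / -z x))) x := fun x =>
    (((hΨ x).const_mul (2 * (1 + b * c))).fun_sub
      ((hz.hasDerivAt_add_const_mul hA x).fun_pow 2)).congr_deriv (by
        have := hz.ne_zero x
        field_simp
        ring)
  have hlt : ∀ x, -(2 * (1 + b * c) * a + 2 * b * -z x + 2 * c * (A x ^ 2 / -z x)) < 0 :=
    fun x => by
      have : 0 < -z x := neg_pos.2 (hneg x)
      exact neg_neg_of_pos (by positivity)
  exact not_periodic_of_hasDerivAt_nonpos hT hd (fun x => (hlt x).le) (hlt 0)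
    fun x => by rw [hAT, hΨT, hzT]

end IsLienardOrbit

end PeriodicOrbits

section Josephson

theorem IsLienardOrbit.neg {A B z : ℝ → ℝ} (hz : IsLienardOrbit A B z) :
    IsLienardOrbit A (-B) (-z) where
  ne_zero x := neg_ne_zero.2 (hz.ne_zero x)
  hasDerivAt x := (hz.hasDerivAt x).neg.congr_deriv (by simp only [Pi.neg_apply, div_neg]; ring)

theorem IsLienardOrbit.reflect {A B z : ℝ → ℝ} (hz : IsLienardOrbit A B z) :
    IsLienardOrbit (fun x => -A (-x)) (fun x => B (-x)) fun x => -z (-x) where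
  ne_zero x := neg_ne_zero.2 (hz.ne_zero (-x))
  hasDerivAt x := (((hz.hasDerivAt (-x)).comp x (hasDerivAt_neg x)).fun_neg).congr_deriv (by
    rw [neg_div_neg_eq]; ring)

variable {a b c : ℝ} {z w : ℝ → ℝ}

theorem sq_mul_cos_sub_mul_sin_le (u v x : ℝ) :
    (u * cos x - v * sin x) ^ 2 ≤ u ^ 2 + v ^ 2 :=
  calc (u * cos x - v * sin x) ^ 2
      ≤ (u * cos x - v * sin x) ^ 2 + (u * sin x + v * cos x) ^ 2 :=
        le_add_of_nonneg_right (sq_nonneg _)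
    _ = u ^ 2 + v ^ 2 := by linear_combination (u ^ 2 + v ^ 2) * sin_sq_add_cos_sq x

theorem strictAntiOn_add_mul_cos_div_sin_sub {s : Set ℝ} (hs : Convex ℝ s) (hc : 0 < c)
    (hbc : b ^ 2 < c ^ 2 * (1 - a ^ 2)) (hne : ∀ x ∈ s, sin x - a ≠ 0) :
    StrictAntiOn (fun x => (b + c * cos x) / (sin x - a)) s := by
  have hd : ∀ x ∈ s, HasDerivAt (fun x => (b + c * cos x) / (sin x - a))
      (-(c + (b * cos x - a * c * sin x)) / (sin x - a) ^ 2) x := fun x hx =>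
    ((((hasDerivAt_cos x).const_mul c).const_add b).fun_div
      ((hasDerivAt_sin x).sub_const a) (hne x hx)).congr_deriv (by
      congr 1
      linear_combination (-c) * sin_sq_add_cos_sq x)
  refine strictAntiOn_of_deriv_neg hs
    (fun x hx => (hd x hx).continuousAt.continuousWithinAt) fun x hx => ?_
  have hxs := interior_subset hx
  have hne' := hne x hxs
  have hlt : (b * cos x - a * c * sin x) ^ 2 < c ^ 2 :=
    (sq_mul_cos_sub_mul_sin_le b (a * c) x).trans_lt (by linarith)
  rw [(hd x hxs).deriv]
  exact div_neg_of_neg_of_pos (by linarith [(abs_lt.1 (abs_lt_of_sq_lt_sq hlt hc.le)).1])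
    (by positivity)

theorem sin_lt_sin_of_mem_Ioo_pi_sub {α x : ℝ} (hα : -(π / 2) ≤ α) (hx : x ∈ Ioo α (π - α)) :
    sin α < sin x := by
  rw [← sub_pos, sin_sub_sin]
  have hs : 0 < sin ((x - α) / 2) :=
    sin_pos_of_pos_of_lt_pi (by linarith [hx.1]) (by linarith [hx.2])
  have hc : 0 < cos ((x + α) / 2) :=
    cos_pos_of_mem_Ioo ⟨by linarith [hx.1], by linarith [hx.2]⟩
  positivity

theorem sin_lt_sin_of_mem_Ioo_pi_sub_add {α x : ℝ} (hα : α ≤ π / 2)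
    (hx : x ∈ Ioo (π - α) (α + 2 * π)) : sin x < sin α := by
  have h := sin_lt_sin_of_mem_Ioo_pi_sub (α := -α) (x := x - π) (by linarith)
    ⟨by linarith [hx.1], by linarith [hx.2]⟩
  rwa [sin_neg, sin_sub_pi, neg_lt_neg_iff] at h

/-- A nowhere zero, `2π`-periodic velocity profile of the Josephson system
`x' = y`, `y' = -(sin x - a) - (b + c * cos x) * y`. -/
structure IsJosephsonOrbit (a b c : ℝ) (z : ℝ → ℝ) : Prop
    extends IsLienardOrbit (fun x => sin x - a) (fun x => b + c * cos x) z where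
  periodic : Function.Periodic z (2 * π)

theorem IsAbelPeriodicSolution.isJosephsonOrbit_inv {y : ℝ → ℝ}
    (hy : IsAbelPeriodicSolution a b c y) (hne : ∀ x, y x ≠ 0) : IsJosephsonOrbit a b c y⁻¹ where
  ne_zero x := inv_ne_zero (hne x)
  hasDerivAt x := ((hy.1 x).inv (hne x)).congr_deriv (by
    have := hne x
    simp only [Pi.inv_apply]
    field_simp
    ring)
  periodic x := by simp only [Pi.inv_apply, hy.2 x]

theorem hasDerivAt_sin_sub (a x : ℝ) : HasDerivAt (fun x => sin x - a) (cos x) x :=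
  (hasDerivAt_sin x).sub_const a

theorem continuous_sin_sub (a : ℝ) : Continuous fun x => sin x - a := by fun_prop

theorem periodic_sin_sub (a : ℝ) : Function.Periodic (fun x => sin x - a) (2 * π) := fun x => by
  simp only [sin_add_two_pi]

namespace IsJosephsonOrbit

theorem neg (hz : IsJosephsonOrbit a b c z) : IsJosephsonOrbit a (-b) (-c) (-z) where
  toIsLienardOrbit := by
    convert hz.toIsLienardOrbit.neg using 2 with x
    simp only [Pi.neg_apply]
    ring
  periodic x := by simp only [Pi.neg_apply, hz.periodic x]

theorem reflect (hz : IsJosephsonOrbit a b c z) :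
    IsJosephsonOrbit (-a) b c fun x => -z (-x) where
  toIsLienardOrbit := by
    convert hz.toIsLienardOrbit.reflect using 3 with x x
    · rw [sin_neg]
      ring
    · rw [cos_neg]
  periodic x := by simp only [neg_add, ← sub_eq_add_neg, hz.periodic.sub_eq]

theorem pos (hz : IsJosephsonOrbit a b c z) (ha : 0 ≤ a) (hb : 0 < b) (hc : 0 ≤ c) (x : ℝ) :
    0 < z x :=
  hz.toIsLienardOrbit.pos_of_periodic (hasDerivAt_sin_sub a)
    (fun x => (hasDerivAt_cos x).congr_deriv (by ring)) two_pi_pos (periodic_sin_sub a)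
    cos_periodic hz.periodic ha hb hc x

theorem eq_of_mul_pos (hz : IsJosephsonOrbit a b c z) (hw : IsJosephsonOrbit a b c w)
    (hb : 0 < b) (hc : c ≤ 0) (hsign : ∀ x, 0 < z x * w x) : z = w :=
  hz.toIsLienardOrbit.eq_of_mul_pos hw.toIsLienardOrbit (hasDerivAt_sin_sub a) two_pi_pos
    (periodic_sin_sub a) hz.periodic hw.periodic hb hc hsign

theorem not_forall_lt_of_sq_le (hz : IsJosephsonOrbit a b c z) (hw : IsJosephsonOrbit a b c w)
    (ha : 0 ≤ a) (hb : 0 < b) (hc : 0 < c) (hbc : c ^ 2 * (1 - a ^ 2) ≤ b ^ 2) :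
    ¬ ∀ x, z x < w x := by
  have hdulac {α l x₀ : ℝ} := hz.toIsLienardOrbit.not_forall_lt_of_combination_nonneg
    hw.toIsLienardOrbit two_pi_pos hz.periodic hw.periodic (hz.pos ha hb hc.le)
    (α := α) (l := l) (x₀ := x₀)
  rcases le_or_gt 1 a with ha₁ | ha₁
  · refine hdulac (α := 0) (l := 1) (x₀ := 0) le_rfl zero_le_one (by norm_num) (fun x => ?_) ?_
    · linarith [sin_le_one x]
    · rw [sin_zero]
      linarith
  have hD : 0 < 1 - a ^ 2 := by nlinarith
  refine hdulac (α := 1 - a ^ 2) (l := a * b) (x₀ := 0) hD.le (by positivity) (by positivity)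
    (fun x => ?_) ?_
  · have hsq : ((1 - a ^ 2) * c * cos x - a * b * sin x) ^ 2 ≤ b ^ 2 :=
      (sq_mul_cos_sub_mul_sin_le _ _ x).trans (by linarith [mul_le_mul_of_nonneg_left hbc hD.le])
    linarith [(abs_le.1 (abs_le_of_sq_le_sq hsq hb.le)).1]
  · rw [sin_zero, cos_zero]
    linarith [mul_pos hD hc]

theorem not_injective_of_nonpos {z : Fin 3 → ℝ → ℝ} (hz : ∀ i, IsJosephsonOrbit a b c (z i))
    (hb : 0 < b) (hc : c ≤ 0) : ¬ Function.Injective z := fun hinj => by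
  obtain ⟨i, j, hij, hsign⟩ :=
    Fintype.exists_ne_map_eq_of_card_lt (fun i => decide (0 < z i 0)) (by decide)
  refine hij (hinj ((hz i).eq_of_mul_pos (hz j) hb hc fun x => ?_))
  rw [decide_eq_decide] at hsign
  rcases (hz i).pos_or_neg with hi | hi <;> rcases (hz j).pos_or_neg with hj | hj
  · exact mul_pos (hi x) (hj x)
  · exact absurd (hsign.1 (hi 0)) (hj 0).not_gt
  · exact absurd (hsign.2 (hj 0)) (hi 0).not_gt
  · exact mul_pos_of_neg_of_neg (hi x) (hj x)

end IsJosephsonOrbit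

theorem IsOrbitTriple.exists_not_periodic_of_lt_sq {z : Fin 3 → ℝ → ℝ}
    (h : IsOrbitTriple (fun x => sin x - a) (fun x => b + c * cos x) z) (ha : |a| < 1) (hb : 0 < b)
    (hc : 0 < c) (hbc : b ^ 2 < c ^ 2 * (1 - a ^ 2)) :
    ∃ i, ¬ Function.Periodic (z i) (2 * π) := by
  obtain ⟨ha₀, ha₁⟩ := abs_lt.1 ha
  obtain ⟨α, hα₀, hα₁, rfl⟩ : ∃ α, -(π / 2) < α ∧ α < π / 2 ∧ sin α = a :=
    ⟨arcsin a, neg_pi_div_two_lt_arcsin.2 ha₀, arcsin_lt_pi_div_two.2 ha₁,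
      sin_arcsin ha₀.le ha₁.le⟩
  have hcos : 0 < cos α := cos_pos_of_mem_Ioo ⟨hα₀, hα₁⟩
  have hApos : ∀ x ∈ Ioo α (π - α), 0 < sin x - sin α := fun x hx =>
    sub_pos.2 (sin_lt_sin_of_mem_Ioo_pi_sub hα₀.le hx)
  have hAneg : ∀ x ∈ Ioo (π - α) (α + 2 * π), sin x - sin α < 0 := fun x hx =>
    sub_neg.2 (sin_lt_sin_of_mem_Ioo_pi_sub_add hα₁.le hx)
  have hBq : b + c * cos (π - α) < 0 := by
    have hlt : b < c * cos α := lt_of_pow_lt_pow_left₀ 2 (by positivity) (by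
      rwa [mul_pow, cos_sq'])
    rw [cos_pi_sub]
    linarith
  obtain ⟨i, hi⟩ := h.exists_ne_of_strictAntiOn_div (by linarith) (by linarith)
    (by fun_prop) (by fun_prop) hApos hAneg
    (strictAntiOn_add_mul_cos_div_sin_sub (convex_Ioo _ _) hc hbc fun x hx => (hApos x hx).ne')
    (strictAntiOn_add_mul_cos_div_sin_sub (convex_Ioo _ _) hc hbc fun x hx => (hAneg x hx).ne)
    (by positivity) hBq (by rw [cos_add_two_pi]; positivity)
  exact ⟨i, fun hper => hi (hper α)⟩

namespace IsJosephsonOrbit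

theorem not_injective_of_pos {z : Fin 3 → ℝ → ℝ} (hz : ∀ i, IsJosephsonOrbit a b c (z i))
    (ha : 0 ≤ a) (hb : 0 < b) (hc : 0 < c) : ¬ Function.Injective z := fun hinj => by
  obtain ⟨σ, hσ⟩ := IsLienardOrbit.exists_perm_strictMono (fun i => (hz i).toIsLienardOrbit)
    (continuous_sin_sub a) hinj
  have hbc : b ^ 2 < c ^ 2 * (1 - a ^ 2) := lt_of_not_ge fun hle =>
    (hz (σ 0)).not_forall_lt_of_sq_le (hz (σ 1)) ha hb hc hle fun x => hσ x (by decide)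
  have ha₁ : |a| < 1 := by
    rw [← sq_lt_one_iff_abs_lt_one, ← sub_pos]
    exact pos_of_mul_pos_right ((sq_nonneg b).trans_lt hbc) (sq_nonneg c)
  have h : IsOrbitTriple (fun x => sin x - a) (fun x => b + c * cos x) fun i => z (σ i) :=
    ⟨fun i => (hz _).toIsLienardOrbit, (hz _).pos ha hb hc.le, hσ⟩
  obtain ⟨i, hi⟩ := h.exists_not_periodic_of_lt_sq ha₁ hb hc hbc
  exact hi (hz _).periodic

theorem not_injective {z : Fin 3 → ℝ → ℝ} (hz : ∀ i, IsJosephsonOrbit a b c (z i))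
    (hb : b ≠ 0) : ¬ Function.Injective z := by
  wlog hb₀ : 0 < b generalizing b c z
  · refine fun hinj => this (fun i => (hz i).neg) (neg_ne_zero.2 hb)
      (neg_pos.2 (hb.lt_of_le (not_lt.1 hb₀))) fun i j hij => hinj (neg_injective hij)
  wlog ha : 0 ≤ a generalizing a z
  · refine fun hinj => this (fun i => (hz i).reflect) (neg_nonneg.2 (not_le.1 ha).le)
      fun i j hij => hinj (funext fun x => ?_)
    simpa using congrFun hij (-x)
  rcases le_or_gt c 0 with hc | hc
  · exact not_injective_of_nonpos hz hb₀ hc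
  · exact not_injective_of_pos hz ha hb₀ hc

end IsJosephsonOrbit

end Josephson

end

theorem abel_at_most_two_nowhere_zero_limit_cycles_general (a b c : ℝ) (hb : b ≠ 0) :
    ¬ ∃ y₁ y₂ y₃ : ℝ → ℝ,
      y₁ ≠ y₂ ∧ y₁ ≠ y₃ ∧ y₂ ≠ y₃ ∧
      IsAbelPeriodicSolution a b c y₁ ∧ (∀ x : ℝ, y₁ x ≠ 0) ∧
      IsAbelPeriodicSolution a b c y₂ ∧ (∀ x : ℝ, y₂ x ≠ 0) ∧
      IsAbelPeriodicSolution a b c y₃ ∧ (∀ x : ℝ, y₃ x ≠ 0) := by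
  rintro ⟨y₁, y₂, y₃, h₁₂, h₁₃, h₂₃, hy₁, hne₁, hy₂, hne₂, hy₃, hne₃⟩
  have hz : ∀ i, IsJosephsonOrbit a b c (![y₁, y₂, y₃] i)⁻¹ := by
    simpa [Fin.forall_fin_succ] using ⟨hy₁.isJosephsonOrbit_inv hne₁,
      hy₂.isJosephsonOrbit_inv hne₂, hy₃.isJosephsonOrbit_inv hne₃⟩
  have hinj : Function.Injective ![y₁, y₂, y₃] :=
    .of_lt_imp_ne (by simp [Fin.forall_fin_succ, h₁₂, h₁₃, h₂₃])
  exact IsJosephsonOrbit.not_injective hz hb (inv_injective.comp hinj)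

/-- The Josephson equation has at most two limit cycles of the second kind:
for `a ≥ 0`, `b > 0`, the Abel equation has at most two nowhere-vanishing
limit cycles. -/
theorem abel_at_most_two_nowhere_zero_limit_cycles
    (a b c : ℝ) (ha : 0 ≤ a) (hb : 0 < b) :
    ¬ ∃ y₁ y₂ y₃ : ℝ → ℝ,
      y₁ ≠ y₂ ∧ y₁ ≠ y₃ ∧ y₂ ≠ y₃ ∧
      IsAbelLimitCycle a b c y₁ ∧ (∀ x : ℝ, y₁ x ≠ 0) ∧
      IsAbelLimitCycle a b c y₂ ∧ (∀ x : ℝ, y₂ x ≠ 0) ∧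
      IsAbelLimitCycle a b c y₃ ∧ (∀ x : ℝ, y₃ x ≠ 0) := by
  rintro ⟨y₁, y₂, y₃, h₁₂, h₁₃, h₂₃, ⟨hy₁, -⟩, hne₁, ⟨hy₂, -⟩, hne₂, ⟨hy₃, -⟩, hne₃⟩
  exact abel_at_most_two_nowhere_zero_limit_cycles_general a b c hb.ne'
    ⟨y₁, y₂, y₃, h₁₂, h₁₃, h₂₃, hy₁, hne₁, hy₂, hne₂, hy₃, hne₃⟩
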